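/- arXiv:2403.13283 — 6 statements merged into one kernel-verified Lean document; each statement's English description precedes it below -/
import Mathlib

section
/- Let n ≥ 1, let I_1,…,I_M and J_1,…,J_N be distinct nonempty subsets of [n] = {1,…,n}, and let α_1,…,α_M and β_1,…,β_N be integers ≥ 1. For each i ∈ [n+1] define the occurrence bitstring x^{(i)} ∈ {0,1}^M by x^{(i)}_l = 1 if i ∈ I_l and x^{(i)}_l = 0 otherwise (so x^{(n+1)} is the all-zero string). Suppose there exists a map f : {0,1}^M → {0,1}^N satisfying (i) the homology property: for all i ∈ [n+1] and r ∈ [N], f(x^{(i)})_r = 1 if and only if i ∈ J_r; and (ii) the contraction condition: d_α(x,x') ≥ d_β(f(x),f(x')) for all x, x' ∈ {0,1}^M. Then for every finite graph G = (V,E) with nonnegative real edge weights and pairwise disjoint boundary vertex sets X_1,…,X_{n+1} ⊆ V, the entropy inequality Σ_{l=1}^M α_l S(I_l) ≥ Σ_{r=1}^N β_r S(J_r) holds, where for nonempty K ⊆ [n], S(K) is the min-cut entropy of the region X_K = ∪_{i∈K} X_i. -/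
open Finset

/-- Weighted Hamming distance on the hypercube `{0,1}^M` (bits modeled as `Bool`):
`d_γ(x,y) = Σ_i γ_i |x_i - y_i|`. -/
def hamDist {M : ℕ} (γ : Fin M → ℤ) (x y : Fin M → Bool) : ℤ :=
  ∑ i, if x i = y i then 0 else γ i

/-- The occurrence bitstring `x^{(i)} ∈ {0,1}^M` of the party `i ∈ [n+1]`:
`x^{(i)}_l = 1` iff `i ∈ I_l` (so the `(n+1)`-th bitstring, the purifier's, is all zeroes). -/
def occ {n M : ℕ} (I : Fin M → Finset (Fin n)) (i : Fin (n + 1)) : Fin M → Bool :=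
  fun l => decide (∃ j : Fin n, (j : ℕ) = (i : ℕ) ∧ j ∈ I l)

/-- Total weight of the edges of the weighted graph `w` with exactly one endpoint
in the vertex set `W`. -/
def cutWeight {V : Type} [Fintype V] [DecidableEq V] (w : V → V → ℝ) (W : Finset V) : ℝ :=
  ∑ u ∈ W, ∑ v ∈ Wᶜ, w u v

/-- Min-cut entropy `S(K)` of the region `X_K = ∪_{i∈K} X_i`: the minimum, over all
vertex sets `W` whose intersection with all the boundary vertices equals `X_K`, of the
weight of the cut defined by `W`. -/
noncomputable def graphEntropy {V : Type} [Fintype V] [DecidableEq V] (w : V → V → ℝ)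
    {n : ℕ} (X : Fin (n + 1) → Finset V) (K : Finset (Fin n)) : ℝ :=
  sInf {c : ℝ | ∃ W : Finset V,
    W ∩ (Finset.univ.biUnion X) = K.biUnion (fun i => X i.castSucc) ∧ c = cutWeight w W}

theorem feas_iff {n : ℕ} {V : Type} [Fintype V] [DecidableEq V] (X : Fin (n + 1) → Finset V)
    (hX : ∀ i i', i ≠ i' → Disjoint (X i) (X i')) (K : Finset (Fin n)) (W : Finset V) :
    W ∩ (Finset.univ.biUnion X) = K.biUnion (fun i => X i.castSucc) ↔
      ∀ i, ∀ v ∈ X i, (v ∈ W ↔ ∃ j : Fin n, (j : ℕ) = (i : ℕ) ∧ j ∈ K) := by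
  constructor
  · intro h i v hv
    have h1 := Finset.ext_iff.mp h v
    simp only [Finset.mem_inter, Finset.mem_biUnion, Finset.mem_univ, true_and] at h1
    constructor
    · intro hW
      obtain ⟨j, hj, hvj⟩ := h1.mp ⟨hW, i, hv⟩
      have hij : j.castSucc = i := by
        by_contra hne
        exact (Finset.disjoint_left.mp (hX _ _ hne)) hvj hv
      exact ⟨j, by rw [← hij]; rfl, hj⟩
    · rintro ⟨j, hji, hj⟩
      have hij : j.castSucc = i := Fin.ext hji
      exact (h1.mpr ⟨j, hj, by rw [hij]; exact hv⟩).1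
  · intro h
    ext v
    simp only [Finset.mem_inter, Finset.mem_biUnion, Finset.mem_univ, true_and]
    constructor
    · rintro ⟨hW, i, hv⟩
      obtain ⟨j, hji, hj⟩ := (h i v hv).mp hW
      have hij : j.castSucc = i := Fin.ext hji
      exact ⟨j, hj, by rw [hij]; exact hv⟩
    · rintro ⟨j, hj, hv⟩
      exact ⟨(h _ v hv).mpr ⟨j, rfl, hj⟩, _, hv⟩

theorem two_cut {V : Type} [Fintype V] [DecidableEq V] (w : V → V → ℝ)
    (hwsymm : ∀ u v, w u v = w v u) (W : Finset V) :
    2 * cutWeight w W =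
      ∑ u, ∑ v, w u v * (if decide (u ∈ W) = decide (v ∈ W) then 0 else 1) := by
  have h1 : cutWeight w W = ∑ u, ∑ v, if u ∈ W ∧ v ∉ W then w u v else 0 := by
    unfold cutWeight
    rw [← Finset.sum_subset (Finset.subset_univ W)]
    · refine Finset.sum_congr rfl fun u hu => ?_
      rw [← Finset.sum_subset (Finset.subset_univ Wᶜ)]
      · refine Finset.sum_congr rfl fun v hv => ?_
        rw [if_pos ⟨hu, Finset.mem_compl.mp hv⟩]
      · intro v _ hv
        rw [if_neg]
        rintro ⟨_, h⟩
        exact hv (Finset.mem_compl.mpr h)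
    · intro u _ hu
      exact Finset.sum_eq_zero fun v _ => if_neg fun h => hu h.1
  have h2 : cutWeight w W = ∑ u, ∑ v, if v ∈ W ∧ u ∉ W then w u v else 0 := by
    rw [h1, Finset.sum_comm]
    refine Finset.sum_congr rfl fun u _ => Finset.sum_congr rfl fun v _ => ?_
    rw [hwsymm]
  rw [two_mul]
  nth_rewrite 1 [h1]
  rw [h2, ← Finset.sum_add_distrib]
  refine Finset.sum_congr rfl fun u _ => ?_
  rw [← Finset.sum_add_distrib]
  refine Finset.sum_congr rfl fun v _ => ?_
  by_cases hu : u ∈ W <;> by_cases hv : v ∈ W <;> simp [hu, hv]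

theorem sum_cut {V : Type} [Fintype V] [DecidableEq V] (w : V → V → ℝ)
    (hwsymm : ∀ u v, w u v = w v u) {M : ℕ} (γ : Fin M → ℤ) (W : Fin M → Finset V)
    (b : V → Fin M → Bool) (hb : ∀ v l, b v l = decide (v ∈ W l)) :
    2 * ∑ l, (γ l : ℝ) * cutWeight w (W l) =
      ∑ u, ∑ v, w u v * (hamDist γ (b u) (b v) : ℝ) := by
  have h : ∀ l, 2 * ((γ l : ℝ) * cutWeight w (W l)) =
      ∑ u, ∑ v, w u v * (if b u l = b v l then 0 else (γ l : ℝ)) := by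
    intro l
    rw [mul_left_comm, two_cut w hwsymm, Finset.mul_sum]
    refine Finset.sum_congr rfl fun u _ => ?_
    rw [Finset.mul_sum]
    refine Finset.sum_congr rfl fun v _ => ?_
    rw [hb, hb]
    split_ifs <;> ring
  rw [Finset.mul_sum, Finset.sum_congr rfl fun l _ => h l, Finset.sum_comm]
  refine Finset.sum_congr rfl fun u _ => ?_
  rw [Finset.sum_comm]
  refine Finset.sum_congr rfl fun v _ => ?_
  rw [← Finset.mul_sum]
  unfold hamDist
  push_cast
  rfl

theorem entropy_finite {V : Type} [Fintype V] [DecidableEq V] (w : V → V → ℝ)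
    {n : ℕ} (X : Fin (n + 1) → Finset V) (K : Finset (Fin n)) :
    {c : ℝ | ∃ W : Finset V, W ∩ (Finset.univ.biUnion X) = K.biUnion (fun i => X i.castSucc) ∧
      c = cutWeight w W}.Finite := by
  refine (Set.finite_range (fun W : Finset V => cutWeight w W)).subset ?_
  rintro c ⟨W, _, rfl⟩
  exact ⟨W, rfl⟩

theorem entropy_attained {V : Type} [Fintype V] [DecidableEq V] (w : V → V → ℝ)
    {n : ℕ} (X : Fin (n + 1) → Finset V) (K : Finset (Fin n)) :
    ∃ W : Finset V, W ∩ (Finset.univ.biUnion X) = K.biUnion (fun i => X i.castSucc) ∧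
      graphEntropy w X K = cutWeight w W := by
  refine Set.Nonempty.csInf_mem ?_ (entropy_finite w X K)
  refine ⟨_, K.biUnion (fun i => X i.castSucc), ?_, rfl⟩
  rw [Finset.inter_eq_left]
  intro v hv
  simp only [Finset.mem_biUnion, Finset.mem_univ, true_and] at hv ⊢
  obtain ⟨j, _, h⟩ := hv
  exact ⟨_, h⟩

theorem stmt_0 {n M N : ℕ} (hn : 1 ≤ n)
    (I : Fin M → Finset (Fin n)) (J : Fin N → Finset (Fin n))
    (hIne : ∀ l, (I l).Nonempty) (hJne : ∀ r, (J r).Nonempty)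
    (hIinj : Function.Injective I) (hJinj : Function.Injective J)
    (hIJ : ∀ l r, I l ≠ J r)
    (α : Fin M → ℤ) (β : Fin N → ℤ) (hα : ∀ l, 1 ≤ α l) (hβ : ∀ r, 1 ≤ β r)
    (f : (Fin M → Bool) → (Fin N → Bool))
    (hhom : ∀ (i : Fin (n + 1)) (r : Fin N),
      f (occ I i) r = true ↔ ∃ j : Fin n, (j : ℕ) = (i : ℕ) ∧ j ∈ J r)
    (hcontr : ∀ x x', hamDist β (f x) (f x') ≤ hamDist α x x')
    (V : Type) [Fintype V] [DecidableEq V]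
    (w : V → V → ℝ) (hw : ∀ u v, 0 ≤ w u v) (hwsymm : ∀ u v, w u v = w v u)
    (X : Fin (n + 1) → Finset V)
    (hX : ∀ i i', i ≠ i' → Disjoint (X i) (X i')) :
    ∑ r, (β r : ℝ) * graphEntropy w X (J r) ≤ ∑ l, (α l : ℝ) * graphEntropy w X (I l) := by
  choose W hW hWe using fun l => entropy_attained w X (I l)
  let b : V → Fin M → Bool := fun v l => decide (v ∈ W l)
  let U : Fin N → Finset V := fun r => Finset.univ.filter fun v => f (b v) r = true
  have hbocc : ∀ i, ∀ v ∈ X i, b v = occ I i := by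
    intro i v hv
    funext l
    exact decide_eq_decide.mpr ((feas_iff X hX _ _).mp (hW l) i v hv)
  have hU : ∀ r, graphEntropy w X (J r) ≤ cutWeight w (U r) := by
    intro r
    refine csInf_le (entropy_finite w X (J r)).bddBelow ⟨U r, ?_, rfl⟩
    rw [feas_iff X hX]
    intro i v hv
    rw [← hhom, ← hbocc i v hv]
    simp [U]
  have h1 : ∑ r, (β r : ℝ) * graphEntropy w X (J r) ≤ ∑ r, (β r : ℝ) * cutWeight w (U r) := by
    refine Finset.sum_le_sum fun r _ => mul_le_mul_of_nonneg_left (hU r) ?_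
    have := hβ r
    exact_mod_cast (by omega : 0 ≤ β r)
  have h2 := sum_cut w hwsymm α W b (fun _ _ => rfl)
  have h3 := sum_cut w hwsymm β U (fun v => f (b v)) (fun v r => by simp [U])
  have h4 : ∑ u, ∑ v, w u v * (hamDist β (f (b u)) (f (b v)) : ℝ) ≤
      ∑ u, ∑ v, w u v * (hamDist α (b u) (b v) : ℝ) :=
    Finset.sum_le_sum fun u _ => Finset.sum_le_sum fun v _ =>
      mul_le_mul_of_nonneg_left (by exact_mod_cast hcontr _ _) (hw u v)
  simp only [hWe]
  linarith
end

section
/- If f : H_M → H_N is a contraction map and x, y ∈ H_M are Hamming distance preserving, then every vertex z ∈ H_M on a Hamming path between x and y maps to a vertex f(z) on a Hamming path between f(x) and f(y); that is, f(z)_r = f(x)_r for every coordinate r ∈ [N] with f(x)_r = f(y)_r. -/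
open Finset

/-- `z` is on a Hamming path between `x` and `y`: `z` agrees with `x` (and `y`)
on every coordinate where `x` and `y` agree. -/
def onHamPath {M : ℕ} (x y z : Fin M → Bool) : Prop :=
  ∀ k, x k = y k → z k = x k

theorem stmt_1 {M N : ℕ} (α : Fin M → ℤ) (β : Fin N → ℤ)
    (hα : ∀ i, 1 ≤ α i) (hβ : ∀ r, 1 ≤ β r)
    (f : (Fin M → Bool) → (Fin N → Bool))
    (hf : ∀ x x', hamDist β (f x) (f x') ≤ hamDist α x x')
    (x y : Fin M → Bool)
    (hdp : hamDist α x y = hamDist β (f x) (f y))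
    (z : Fin M → Bool) (hz : onHamPath x y z) :
    onHamPath (f x) (f y) (f z) := by
  intro r hr
  by_contra hne
  -- distances along the path add up in the domain
  have h1 : hamDist α x z + hamDist α z y = hamDist α x y := by
    unfold hamDist
    rw [← Finset.sum_add_distrib]
    refine Finset.sum_congr rfl fun i _ => ?_
    have := hz i
    cases hx : x i <;> cases hy : y i <;> cases hzi : z i <;> simp_all
  -- strict triangle inequality in the codomain
  have h2 : hamDist β (f x) (f y) < hamDist β (f x) (f z) + hamDist β (f z) (f y) := by
    unfold hamDist
    rw [← Finset.sum_add_distrib]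
    refine Finset.sum_lt_sum (fun i _ => ?_) ⟨r, Finset.mem_univ r, ?_⟩
    · have := hβ i
      cases f x i <;> cases f y i <;> cases f z i <;> simp <;> omega
    · have := hβ r
      have h3 : f x r ≠ f z r := fun h => hne h.symm
      have h4 : f z r ≠ f y r := fun h => hne (h.trans hr.symm)
      rw [if_pos hr, if_neg h3, if_neg h4]
      omega
  have h3 := hf x z
  have h4 := hf z y
  omega
end

section
/- If f : H_M → H_N is a contraction map, x, y ∈ H_M are Hamming distance preserving, and z ∈ H_M is on a Hamming path between x and y, then d_β(f(x),f(y)) = d_β(f(x),f(z)) + d_β(f(y),f(z)). -/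
open Finset

theorem stmt_2 {M N : ℕ} (α : Fin M → ℤ) (β : Fin N → ℤ)
    (hα : ∀ i, 1 ≤ α i) (hβ : ∀ r, 1 ≤ β r)
    (f : (Fin M → Bool) → (Fin N → Bool))
    (hf : ∀ x x', hamDist β (f x) (f x') ≤ hamDist α x x')
    (x y : Fin M → Bool)
    (hdp : hamDist α x y = hamDist β (f x) (f y))
    (z : Fin M → Bool) (hz : onHamPath x y z) :
    hamDist β (f x) (f y) = hamDist β (f x) (f z) + hamDist β (f y) (f z) := by
  have key : hamDist α x y = hamDist α x z + hamDist α y z := by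
    unfold hamDist
    rw [← Finset.sum_add_distrib]
    refine Finset.sum_congr rfl fun i _ => ?_
    have h := hz i
    revert h
    cases x i <;> cases y i <;> cases z i <;> simp
  have tri : hamDist β (f x) (f y) ≤ hamDist β (f x) (f z) + hamDist β (f y) (f z) := by
    unfold hamDist
    rw [← Finset.sum_add_distrib]
    refine Finset.sum_le_sum fun i _ => ?_
    have h := hβ i
    cases f x i <;> cases f y i <;> cases f z i <;> simp <;> omega
  have h1 := hf x z
  have h2 := hf y z
  omega
end

section
/- If f : H_M → H_N is a contraction map and x, y ∈ H_M satisfy 0 ≤ d_α(x,y) − d_β(f(x),f(y)) ≤ 1, then every vertex z ∈ H_M on a Hamming path between x and y maps to a vertex f(z) on a Hamming path between f(x) and f(y); that is, f(z)_r = f(x)_r for every coordinate r ∈ [N] with f(x)_r = f(y)_r. -/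
open Finset

theorem stmt_4 {M N : ℕ} (α : Fin M → ℤ) (β : Fin N → ℤ)
    (hα : ∀ i, 1 ≤ α i) (hβ : ∀ r, 1 ≤ β r)
    (f : (Fin M → Bool) → (Fin N → Bool))
    (hf : ∀ x x', hamDist β (f x) (f x') ≤ hamDist α x x')
    (x y : Fin M → Bool)
    (h0 : 0 ≤ hamDist α x y - hamDist β (f x) (f y))
    (h1 : hamDist α x y - hamDist β (f x) (f y) ≤ 1)
    (z : Fin M → Bool) (hz : onHamPath x y z) :
    onHamPath (f x) (f y) (f z) := by
  intro r hr
  by_contra hne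
  have hA : hamDist α x z + hamDist α z y = hamDist α x y := by
    unfold hamDist
    rw [← Finset.sum_add_distrib]
    refine Finset.sum_congr rfl fun i _ => ?_
    have h := hz i
    cases hx : x i <;> cases hy : y i <;> cases hzz : z i <;> simp_all
  have hB : hamDist β (f x) (f y) + 2 ≤ hamDist β (f x) (f z) + hamDist β (f z) (f y) := by
    unfold hamDist
    rw [← Finset.sum_add_distrib, ← Finset.add_sum_erase _ _ (Finset.mem_univ r),
      ← Finset.add_sum_erase (a := r) Finset.univ (fun i =>
        (if f x i = f z i then 0 else β i) + (if f z i = f y i then 0 else β i))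
        (Finset.mem_univ r)]
    have hs : ∑ i ∈ Finset.univ.erase r, (if f x i = f y i then 0 else β i) ≤
        ∑ i ∈ Finset.univ.erase r,
          ((if f x i = f z i then 0 else β i) + (if f z i = f y i then 0 else β i)) := by
      refine Finset.sum_le_sum fun i _ => ?_
      have := hβ i
      split_ifs <;> first | omega | (exfalso; simp_all)
    have hb := hβ r
    have e1 : ¬ f x r = f z r := fun h => hne h.symm
    have e2 : ¬ f z r = f y r := fun h => hne (h.trans hr.symm)
    simp only [if_pos hr, if_neg e1, if_neg e2]
    linarith
  have := hf x z
  have := hf z y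
  linarith
end

section
/- If f : H_M → H_N is a contraction map, x, y ∈ H_M are Hamming distance preserving, and z ∈ H_M is k-off Hamming paths between x and y, then f(z) is at most k-off Hamming paths between f(x) and f(y); that is, min over e' in HP(f(x),f(y)) of d_β(f(z),e') is at most k. -/
open Finset

instance {M : ℕ} (x y : Fin M → Bool) : DecidablePred (onHamPath x y) :=
  fun z => inferInstanceAs (Decidable (∀ k, x k = y k → z k = x k))

/-- `HP(x,y)`: the (finite, nonempty) set of vertices on Hamming paths between `x` and `y`. -/
def hpSet {M : ℕ} (x y : Fin M → Bool) : Finset (Fin M → Bool) :=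
  Finset.univ.filter (onHamPath x y)

lemma hpSet_nonempty {M : ℕ} (x y : Fin M → Bool) : (hpSet x y).Nonempty :=
  ⟨x, by simp [hpSet, onHamPath]⟩

/-- `z` is `k`-off Hamming paths between `x` and `y` when
`k = min_{e ∈ HP(x,y)} d_γ(z,e)`; this is that minimum. -/
def offDist {M : ℕ} (γ : Fin M → ℤ) (x y z : Fin M → Bool) : ℤ :=
  (hpSet x y).inf' (hpSet_nonempty x y) (fun e => hamDist γ z e)

lemma hamDist_add_of_onHamPath {M : ℕ} (γ : Fin M → ℤ) (x y z : Fin M → Bool)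
    (h : onHamPath x y z) : hamDist γ x z + hamDist γ z y = hamDist γ x y := by
  unfold hamDist
  rw [← Finset.sum_add_distrib]
  refine Finset.sum_congr rfl fun i _ => ?_
  have := h i
  cases hx : x i <;> cases hy : y i <;> cases hz : z i <;> simp_all

lemma onHamPath_of_hamDist_le {M : ℕ} (γ : Fin M → ℤ) (hγ : ∀ i, 1 ≤ γ i)
    (x y z : Fin M → Bool)
    (h : hamDist γ x z + hamDist γ z y ≤ hamDist γ x y) : onHamPath x y z := by
  intro k hk
  by_contra hne
  refine absurd h (not_le.mpr ?_)
  unfold hamDist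
  rw [← Finset.sum_add_distrib]
  refine Finset.sum_lt_sum (fun i _ => ?_) ⟨k, Finset.mem_univ k, ?_⟩
  · have := hγ i
    cases x i <;> cases y i <;> cases z i <;> simp <;> omega
  · have := hγ k
    revert hk hne
    cases x k <;> cases y k <;> cases z k <;> simp <;> omega

theorem stmt_9 {M N : ℕ} (α : Fin M → ℤ) (β : Fin N → ℤ)
    (hα : ∀ i, 1 ≤ α i) (hβ : ∀ r, 1 ≤ β r)
    (f : (Fin M → Bool) → (Fin N → Bool))
    (hf : ∀ x x', hamDist β (f x) (f x') ≤ hamDist α x x')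
    (x y : Fin M → Bool)
    (hdp : hamDist α x y = hamDist β (f x) (f y))
    (z : Fin M → Bool) (k : ℤ) (hk : offDist α x y z = k) :
    offDist β (f x) (f y) (f z) ≤ k := by
  obtain ⟨e, he, hmin⟩ := Finset.exists_mem_eq_inf' (hpSet_nonempty x y)
    (fun e => hamDist α z e)
  have he' : onHamPath x y e := by simpa [hpSet] using he
  have h1 := hamDist_add_of_onHamPath α x y e he'
  have h2 : onHamPath (f x) (f y) (f e) := by
    apply onHamPath_of_hamDist_le β hβ
    have := hf x e
    have := hf e y
    omega
  have h3 : f e ∈ hpSet (f x) (f y) := by simpa [hpSet] using h2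
  rw [← hk]
  unfold offDist
  rw [hmin]
  exact (Finset.inf'_le _ h3).trans (hf z e)
end

section
/- Let f : H_M → H_N be a contraction map, let (x,y) and (a,b) be Hamming distance preserving pairs in H_M, and let z ∈ H_M be 1-off Hamming paths between x and y and also 1-off Hamming paths between a and b. Suppose there exists a coordinate r ∈ [N] with f(x)_r = f(y)_r ≠ f(a)_r = f(b)_r. Then: (i) for every coordinate s ∈ [N] with f(x)_s = f(y)_s = f(a)_s = f(b)_s, one has f(z)_s equal to this common value; and (ii) f(z)_r differs from exactly one of the two values f(x)_r and f(a)_r, and if f(z)_r = f(x)_r then f(z)_s = f(a)_s for every coordinate s ≠ r with f(a)_s = f(b)_s, while if f(z)_r = f(a)_r then f(z)_s = f(x)_s for every coordinate s ≠ r with f(x)_s = f(y)_s. -/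
open Finset

lemma ham_upper {M : ℕ} (γ : Fin M → ℤ) (hγ : ∀ i, 1 ≤ γ i) (x y z : Fin M → Bool)
    (h : offDist γ x y z = 1) :
    hamDist γ x z + hamDist γ z y ≤ hamDist γ x y + 2 := by
  obtain ⟨e, he, hd⟩ := Finset.exists_mem_eq_inf' (hpSet_nonempty x y) (fun e => hamDist γ z e)
  have hd1 : hamDist γ z e = 1 := by rw [← h]; exact hd.symm
  have hp : onHamPath x y e := by simpa [hpSet] using he
  have key : hamDist γ x z + hamDist γ z y ≤
      hamDist γ x y + (hamDist γ z e + hamDist γ z e) := by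
    unfold hamDist
    simp only [← Finset.sum_add_distrib]
    apply Finset.sum_le_sum
    intro i _
    have h1 := hp i
    have h2 := hγ i
    revert h1
    cases x i <;> cases y i <;> cases z i <;> cases e i <;> simp <;> omega
  omega

lemma ham_lower {N : ℕ} (β : Fin N → ℤ) (hβ : ∀ i, 1 ≤ β i) (x y z : Fin N → Bool)
    (h : hamDist β x z + hamDist β z y ≤ hamDist β x y + 2)
    (s t : Fin N) (hst : s ≠ t) (hs : x s = y s) (ht : x t = y t)
    (hs' : z s ≠ x s) : z t = x t := by
  by_contra ht'
  have key : hamDist β x y +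
      ((∑ i, if i = s then (2 : ℤ) else 0) + (∑ i, if i = t then (2 : ℤ) else 0)) ≤
      hamDist β x z + hamDist β z y := by
    unfold hamDist
    simp only [← Finset.sum_add_distrib]
    apply Finset.sum_le_sum
    intro i _
    have h2 := hβ i
    by_cases h3 : i = s
    · subst h3
      have h4 : z i ≠ y i := hs ▸ hs'
      simp [hst, hs, h4, h4.symm]
      omega
    · by_cases h5 : i = t
      · subst h5
        have h4 : z i ≠ y i := ht ▸ ht'
        simp [h3, ht, h4, h4.symm]
        omega
      · simp only [h3, h5, if_false]
        cases x i <;> cases y i <;> cases z i <;> simp <;> omega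
  simp at key
  omega

theorem stmt_10 {M N : ℕ} (α : Fin M → ℤ) (β : Fin N → ℤ)
    (hα : ∀ i, 1 ≤ α i) (hβ : ∀ r, 1 ≤ β r)
    (f : (Fin M → Bool) → (Fin N → Bool))
    (hf : ∀ x x', hamDist β (f x) (f x') ≤ hamDist α x x')
    (x y a b : Fin M → Bool)
    (hxy : hamDist α x y = hamDist β (f x) (f y))
    (hab : hamDist α a b = hamDist β (f a) (f b))
    (z : Fin M → Bool)
    (hzxy : offDist α x y z = 1) (hzab : offDist α a b z = 1)
    (r : Fin N) (hr1 : f x r = f y r) (hr2 : f a r = f b r) (hr3 : f x r ≠ f a r) :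
    (∀ s, f x s = f y s → f a s = f b s → f x s = f a s → f z s = f x s) ∧
    (f z r = f x r ↔ ¬ f z r = f a r) ∧
    (f z r = f x r → ∀ s, s ≠ r → f a s = f b s → f z s = f a s) ∧
    (f z r = f a r → ∀ s, s ≠ r → f x s = f y s → f z s = f x s) := by
  have h1 : hamDist β (f x) (f z) + hamDist β (f z) (f y) ≤ hamDist β (f x) (f y) + 2 := by
    have := ham_upper α hα x y z hzxy
    have := hf x z
    have := hf z y
    omega
  have h2 : hamDist β (f a) (f z) + hamDist β (f z) (f b) ≤ hamDist β (f a) (f b) + 2 := by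
    have := ham_upper α hα a b z hzab
    have := hf a z
    have := hf z b
    omega
  have k1 := ham_lower β hβ _ _ _ h1
  have k2 := ham_lower β hβ _ _ _ h2
  have hiff : f z r = f x r ↔ ¬ f z r = f a r := by
    revert hr3
    cases f z r <;> cases f x r <;> cases f a r <;> simp
  have p3 : f z r = f x r → ∀ s, s ≠ r → f a s = f b s → f z s = f a s :=
    fun h s hs hab' => k2 r s hs.symm hr2 hab' (hiff.1 h)
  have p4 : f z r = f a r → ∀ s, s ≠ r → f x s = f y s → f z s = f x s :=
    fun h s hs hxy' => k1 r s hs.symm hr1 hxy' (fun h' => hiff.1 h' h)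
  refine ⟨?_, hiff, p3, p4⟩
  intro s hs1 hs2 hs3
  have hsr : s ≠ r := by
    rintro rfl
    exact hr3 hs3
  by_cases h : f z r = f x r
  · rw [hs3]; exact p3 h s hsr hs2
  · exact p4 (by by_contra h'; exact h (hiff.2 h')) s hsr hs1
end
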